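/- For the doubly symmetric binary source with crossover probability ρ and Hamming distortion measures, the rate-distortion function is R(d1,d2) = h(ρ) − h(d_min) if d_min ≤ ρ, and R(d1,d2) = 0 otherwise, where d_min = min{d1,d2}. -/

import Mathlib

open scoped BigOperators Classical

noncomputable section

namespace TWR

/-- Base-2 Shannon entropy of a finitely supported distribution (with the
convention `0 * log 0 = 0`, automatic since `Real.logb 2 0 = 0`). -/
def H2 {α : Type} [Fintype α] (p : α → ℝ) : ℝ :=
  -∑ a, p a * Real.logb 2 (p a)

/-- `p` is a probability mass function. -/
def IsPmf {α : Type} [Fintype α] (p : α → ℝ) : Prop :=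
  (∀ a, 0 ≤ p a) ∧ ∑ a, p a = 1

/-- `W` is a conditional pmf. -/
def IsCondPmf {α β : Type} [Fintype β] (W : α → β → ℝ) : Prop :=
  ∀ a, IsPmf (W a)

/-- Mutual information `I(A;B)` (base 2) of a joint pmf on `α × β`. -/
def MI {α β : Type} [Fintype α] [Fintype β] (p : α × β → ℝ) : ℝ :=
  H2 (fun a => ∑ b, p (a, b)) + H2 (fun b => ∑ a, p (a, b)) - H2 p

/-- Conditional entropy `H(A|B)` of a joint pmf on `α × β`. -/
def condH {α β : Type} [Fintype α] [Fintype β] (p : α × β → ℝ) : ℝ :=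
  H2 p - H2 (fun b => ∑ a, p (a, b))

/-- Conditional mutual information `I(A;C|B)` of a joint pmf on `α × β × γ`,
conditioning on the middle coordinate (`I(A;C|B) = H(A,B)+H(B,C)-H(A,B,C)-H(B)`). -/
def condMI {α β γ : Type} [Fintype α] [Fintype β] [Fintype γ] (p : α × β × γ → ℝ) : ℝ :=
  H2 (fun ab : α × β => ∑ c, p (ab.1, ab.2, c)) +
    H2 (fun bc : β × γ => ∑ a, p (a, bc.1, bc.2)) -
    H2 p - H2 (fun b : β => ∑ a, ∑ c, p (a, b, c))

/-- Markov chain `A − B − C` for a joint pmf on `α × β × γ`. -/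
def Markov {α β γ : Type} [Fintype α] [Fintype β] [Fintype γ] (p : α × β × γ → ℝ) : Prop :=
  ∀ a b c, p (a, b, c) * (∑ a', ∑ c', p (a', b, c')) =
    (∑ c', p (a, b, c')) * (∑ a', p (a', b, c))

variable {𝒳 𝒴 Xh Yh 𝒲 𝒰 𝒱 : Type}
variable [Fintype 𝒳] [Fintype 𝒴] [Fintype Xh] [Fintype Yh]
variable [Fintype 𝒲] [Fintype 𝒰] [Fintype 𝒱]

/-- The i.i.d. block source. -/
def iid (q : 𝒳 × 𝒴 → ℝ) (n : ℕ) : (Fin n → 𝒳) × (Fin n → 𝒴) → ℝ :=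
  fun xy => ∏ i, q (xy.1 i, xy.2 i)

/-- Average distortion at receiver 1 of the RD code `(f, g1, ·)`. -/
def Delta1 (q : 𝒳 × 𝒴 → ℝ) (δ1 : 𝒳 → Xh → ℝ) {n m : ℕ}
    (f : (Fin n → 𝒳) × (Fin n → 𝒴) → Fin m)
    (g1 : Fin m × (Fin n → 𝒴) → Fin n → Xh) : ℝ :=
  ∑ xy : (Fin n → 𝒳) × (Fin n → 𝒴),
    iid q n xy * ((n : ℝ)⁻¹ * ∑ i, δ1 (xy.1 i) (g1 (f xy, xy.2) i))

/-- Average distortion at receiver 2 of the RD code `(f, ·, g2)`. -/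
def Delta2 (q : 𝒳 × 𝒴 → ℝ) (δ2 : 𝒴 → Yh → ℝ) {n m : ℕ}
    (f : (Fin n → 𝒳) × (Fin n → 𝒴) → Fin m)
    (g2 : Fin m × (Fin n → 𝒳) → Fin n → Yh) : ℝ :=
  ∑ xy : (Fin n → 𝒳) × (Fin n → 𝒴),
    iid q n xy * ((n : ℝ)⁻¹ * ∑ i, δ2 (xy.2 i) (g2 (f xy, xy.1) i))

/-- `r` is a `(d1,d2)`-achievable rate (source coding). -/
def RDAchievable (q : 𝒳 × 𝒴 → ℝ) (δ1 : 𝒳 → Xh → ℝ) (δ2 : 𝒴 → Yh → ℝ)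
    (d1 d2 r : ℝ) : Prop :=
  ∀ ε > (0 : ℝ), ∃ (n m : ℕ) (f : (Fin n → 𝒳) × (Fin n → 𝒴) → Fin m)
    (g1 : Fin m × (Fin n → 𝒴) → Fin n → Xh)
    (g2 : Fin m × (Fin n → 𝒳) → Fin n → Yh),
    0 < n ∧ Real.logb 2 m / n ≤ r + ε ∧
    Delta1 q δ1 f g1 ≤ d1 + ε ∧ Delta2 q δ2 f g2 ≤ d2 + ε

/-- The rate-distortion function `R(d1,d2)`. -/
def RD (q : 𝒳 × 𝒴 → ℝ) (δ1 : 𝒳 → Xh → ℝ) (δ2 : 𝒴 → Yh → ℝ) (d1 d2 : ℝ) : ℝ :=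
  sInf {r : ℝ | 0 ≤ r ∧ RDAchievable q δ1 δ2 d1 d2 r}

/-- `r` is `(d1,d2)`-achievable with common reconstructions. -/
def CRAchievable (q : 𝒳 × 𝒴 → ℝ) (δ1 : 𝒳 → Xh → ℝ) (δ2 : 𝒴 → Yh → ℝ)
    (d1 d2 r : ℝ) : Prop :=
  ∀ ε > (0 : ℝ), ∃ (n m : ℕ) (f : (Fin n → 𝒳) × (Fin n → 𝒴) → Fin m)
    (g1 : Fin m × (Fin n → 𝒴) → Fin n → Xh)
    (g2 : Fin m × (Fin n → 𝒳) → Fin n → Yh)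
    (φ1 : Fin m × (Fin n → 𝒴) → Fin n → Yh)
    (φ2 : Fin m × (Fin n → 𝒳) → Fin n → Xh),
    0 < n ∧ Real.logb 2 m / n ≤ r + ε ∧
    Delta1 q δ1 f g1 ≤ d1 + ε ∧ Delta2 q δ2 f g2 ≤ d2 + ε ∧
    (∑ xy : (Fin n → 𝒳) × (Fin n → 𝒴),
      if φ2 (f xy, xy.1) = g1 (f xy, xy.2) then 0 else iid q n xy) ≤ ε ∧
    (∑ xy : (Fin n → 𝒳) × (Fin n → 𝒴),
      if φ1 (f xy, xy.2) = g2 (f xy, xy.1) then 0 else iid q n xy) ≤ ε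

/-- The common-reconstruction rate-distortion function `R_CR(d1,d2)`. -/
def CRRD (q : 𝒳 × 𝒴 → ℝ) (δ1 : 𝒳 → Xh → ℝ) (δ2 : 𝒴 → Yh → ℝ) (d1 d2 : ℝ) : ℝ :=
  sInf {r : ℝ | 0 ≤ r ∧ CRAchievable q δ1 δ2 d1 d2 r}

/-- The conditional rate-distortion function `R_{X|Y}(d1)`. -/
def condRD (q : 𝒳 × 𝒴 → ℝ) (δ1 : 𝒳 → Xh → ℝ) (d1 : ℝ) : ℝ :=
  sInf {r : ℝ | ∃ W : 𝒳 × 𝒴 → Xh → ℝ, IsCondPmf W ∧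
    (∑ x, ∑ y, ∑ xh, q (x, y) * W (x, y) xh * δ1 x xh) ≤ d1 ∧
    r = condMI (fun t : 𝒳 × 𝒴 × Xh => q (t.1, t.2.1) * W (t.1, t.2.1) t.2.2)}

/-- Swap the two components of a joint source. -/
def swap (q : 𝒳 × 𝒴 → ℝ) : 𝒴 × 𝒳 → ℝ := fun t => q (t.2, t.1)

/-- The marginal rate-distortion function `R_X(d)`. -/
def margRD (qX : 𝒳 → ℝ) (δ1 : 𝒳 → Xh → ℝ) (d1 : ℝ) : ℝ :=
  sInf {r : ℝ | ∃ W : 𝒳 → Xh → ℝ, IsCondPmf W ∧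
    (∑ x, ∑ xh, qX x * W x xh * δ1 x xh) ≤ d1 ∧
    r = MI (fun t : 𝒳 × Xh => qX t.1 * W t.1 t.2)}

def margX (q : 𝒳 × 𝒴 → ℝ) : 𝒳 → ℝ := fun x => ∑ y, q (x, y)
def margY (q : 𝒳 × 𝒴 → ℝ) : 𝒴 → ℝ := fun y => ∑ x, q (x, y)

/-- The joint rate-distortion function `R_{XY}(d1,d2)`. -/
def jointRD (q : 𝒳 × 𝒴 → ℝ) (δ1 : 𝒳 → Xh → ℝ) (δ2 : 𝒴 → Yh → ℝ) (d1 d2 : ℝ) : ℝ :=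
  sInf {r : ℝ | ∃ W : 𝒳 × 𝒴 → Xh × Yh → ℝ, IsCondPmf W ∧
    (∑ xy : 𝒳 × 𝒴, ∑ z : Xh × Yh, q xy * W xy z * δ1 xy.1 z.1) ≤ d1 ∧
    (∑ xy : 𝒳 × 𝒴, ∑ z : Xh × Yh, q xy * W xy z * δ2 xy.2 z.2) ≤ d2 ∧
    r = MI (fun t : (𝒳 × 𝒴) × (Xh × Yh) => q t.1 * W t.1 t.2)}

/-- The Wyner–Ziv rate-distortion function `R^{WZ}_{X|Y}(d1)`
(with auxiliary alphabet of cardinality `|𝒳| + 1`). -/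
def wzRD (q : 𝒳 × 𝒴 → ℝ) (δ1 : 𝒳 → Xh → ℝ) (d1 : ℝ) : ℝ :=
  sInf {r : ℝ | ∃ p : Fin (Fintype.card 𝒳 + 1) × 𝒳 × 𝒴 → ℝ, IsPmf p ∧
    (∀ x y, (∑ a, p (a, x, y)) = q (x, y)) ∧ Markov p ∧
    (∃ π1 : Fin (Fintype.card 𝒳 + 1) × 𝒴 → Xh,
      (∑ a, ∑ x, ∑ y, p (a, x, y) * δ1 x (π1 (a, y))) ≤ d1) ∧
    r = condMI (fun t : 𝒳 × 𝒴 × Fin (Fintype.card 𝒳 + 1) => p (t.2.2, t.1, t.2.1))}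

/-- The set over which the single-letter CR formula
`max{I(X;X̂,Ŷ|Y), I(Y;X̂,Ŷ|X)}` is minimised. -/
def crFormulaSet (q : 𝒳 × 𝒴 → ℝ) (δ1 : 𝒳 → Xh → ℝ) (δ2 : 𝒴 → Yh → ℝ)
    (d1 d2 : ℝ) : Set ℝ :=
  {r : ℝ | ∃ W : 𝒳 × 𝒴 → Xh × Yh → ℝ, IsCondPmf W ∧
    (∑ x, ∑ y, ∑ z : Xh × Yh, q (x, y) * W (x, y) z * δ1 x z.1) ≤ d1 ∧
    (∑ x, ∑ y, ∑ z : Xh × Yh, q (x, y) * W (x, y) z * δ2 y z.2) ≤ d2 ∧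
    r = max
      (condMI (fun t : 𝒳 × 𝒴 × (Xh × Yh) => q (t.1, t.2.1) * W (t.1, t.2.1) t.2.2))
      (condMI (fun t : 𝒴 × 𝒳 × (Xh × Yh) => q (t.2.1, t.1) * W (t.2.1, t.1) t.2.2))}

/-- Joint law of source blocks and channel outputs for a JSC encoder. -/
def jscP (q : 𝒳 × 𝒴 → ℝ) (qUV : 𝒲 → 𝒰 × 𝒱 → ℝ) {n m : ℕ}
    (f : (Fin n → 𝒳) × (Fin n → 𝒴) → Fin m → 𝒲)
    (x : Fin n → 𝒳) (y : Fin n → 𝒴) (u : Fin m → 𝒰) (v : Fin m → 𝒱) : ℝ :=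
  (∏ i, q (x i, y i)) * ∏ j, qUV (f (x, y) j) (u j, v j)

/-- `(d1,d2)` is achievable by joint source-channel coding with source rate `κs`
and channel rate `κc` (bandwidth expansion `κc/κs`). -/
def JSCAchievable (q : 𝒳 × 𝒴 → ℝ) (qUV : 𝒲 → 𝒰 × 𝒱 → ℝ)
    (δ1 : 𝒳 → Xh → ℝ) (δ2 : 𝒴 → Yh → ℝ) (κs κc d1 d2 : ℝ) : Prop :=
  ∀ ε > (0 : ℝ), ∃ (t n m : ℕ) (f : (Fin n → 𝒳) × (Fin n → 𝒴) → Fin m → 𝒲)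
    (g1 : (Fin m → 𝒰) × (Fin n → 𝒴) → Fin n → Xh)
    (g2 : (Fin m → 𝒱) × (Fin n → 𝒳) → Fin n → Yh),
    0 < t ∧ (n : ℝ) = κs * t ∧ (m : ℝ) = κc * t ∧
    (∑ x : Fin n → 𝒳, ∑ y : Fin n → 𝒴, ∑ u : Fin m → 𝒰, ∑ v : Fin m → 𝒱,
      jscP q qUV f x y u v * ((n : ℝ)⁻¹ * ∑ i, δ1 (x i) (g1 (u, y) i))) ≤ d1 + ε ∧
    (∑ x : Fin n → 𝒳, ∑ y : Fin n → 𝒴, ∑ u : Fin m → 𝒰, ∑ v : Fin m → 𝒱,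
      jscP q qUV f x y u v * ((n : ℝ)⁻¹ * ∑ i, δ2 (y i) (g2 (v, x) i))) ≤ d2 + ε

/-- `(d1,d2)` is achievable by joint source-channel coding with common
reconstructions, source rate `κs` and channel rate `κc`. -/
def CRJSCAchievable (q : 𝒳 × 𝒴 → ℝ) (qUV : 𝒲 → 𝒰 × 𝒱 → ℝ)
    (δ1 : 𝒳 → Xh → ℝ) (δ2 : 𝒴 → Yh → ℝ) (κs κc d1 d2 : ℝ) : Prop :=
  ∀ ε > (0 : ℝ), ∃ (t n m : ℕ) (f : (Fin n → 𝒳) × (Fin n → 𝒴) → Fin m → 𝒲)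
    (g1 : (Fin m → 𝒰) × (Fin n → 𝒴) → Fin n → Xh)
    (g2 : (Fin m → 𝒱) × (Fin n → 𝒳) → Fin n → Yh)
    (φ1 : (Fin m → 𝒰) × (Fin n → 𝒴) → Fin n → Yh)
    (φ2 : (Fin m → 𝒱) × (Fin n → 𝒳) → Fin n → Xh),
    0 < t ∧ (n : ℝ) = κs * t ∧ (m : ℝ) = κc * t ∧
    (∑ x : Fin n → 𝒳, ∑ y : Fin n → 𝒴, ∑ u : Fin m → 𝒰, ∑ v : Fin m → 𝒱,
      jscP q qUV f x y u v * ((n : ℝ)⁻¹ * ∑ i, δ1 (x i) (g1 (u, y) i))) ≤ d1 + ε ∧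
    (∑ x : Fin n → 𝒳, ∑ y : Fin n → 𝒴, ∑ u : Fin m → 𝒰, ∑ v : Fin m → 𝒱,
      jscP q qUV f x y u v * ((n : ℝ)⁻¹ * ∑ i, δ2 (y i) (g2 (v, x) i))) ≤ d2 + ε ∧
    (∑ x : Fin n → 𝒳, ∑ y : Fin n → 𝒴, ∑ u : Fin m → 𝒰, ∑ v : Fin m → 𝒱,
      if φ2 (v, x) = g1 (u, y) then 0 else jscP q qUV f x y u v) ≤ ε ∧
    (∑ x : Fin n → 𝒳, ∑ y : Fin n → 𝒴, ∑ u : Fin m → 𝒰, ∑ v : Fin m → 𝒱,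
      if φ1 (u, y) = g2 (v, x) then 0 else jscP q qUV f x y u v) ≤ ε

/-- `I(W;U)` under the joint law `pW · qUV` (U-marginal of the broadcast channel). -/
def chMIU (qUV : 𝒲 → 𝒰 × 𝒱 → ℝ) (pW : 𝒲 → ℝ) : ℝ :=
  MI (fun t : 𝒲 × 𝒰 => pW t.1 * ∑ v, qUV t.1 (t.2, v))

/-- `I(W;V)` under the joint law `pW · qUV` (V-marginal of the broadcast channel). -/
def chMIV (qUV : 𝒲 → 𝒰 × 𝒱 → ℝ) (pW : 𝒲 → ℝ) : ℝ :=
  MI (fun t : 𝒲 × 𝒱 => pW t.1 * ∑ u, qUV t.1 (u, t.2))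

/-- The doubly symmetric binary source with crossover probability `ρ`. -/
def dsbs (ρ : ℝ) : Bool × Bool → ℝ :=
  fun t => if t.1 = t.2 then (1 - ρ) / 2 else ρ / 2

/-- The Hamming distortion measure. -/
def dHam {α : Type} : α → α → ℝ := fun a b => if a = b then 0 else 1

/-- The binary entropy function (base 2). -/
def binEnt (x : ℝ) : ℝ := -(x * Real.logb 2 x) - (1 - x) * Real.logb 2 (1 - x)

/-- A difference distortion measure built from a per-letter function of the
(modular) difference. -/
def diffD {l : ℕ} (δ : Fin l → ℝ) : Fin l → Fin l → ℝ := fun a b => δ (a - b)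

/-- Capacity of the modulo-additive channel with noise `pN` and input
distortion constraint `d`. -/
def Cadd {l : ℕ} (δ : Fin l → ℝ) (d : ℝ) (pN : Fin l → ℝ) : ℝ :=
  sSup {r : ℝ | ∃ pW : Fin l → ℝ, IsPmf pW ∧ (∑ w, pW w * δ w) ≤ d ∧
    r = MI (fun t : Fin l × Fin l => pW t.1 * pN (t.2 - t.1))}

/-- The minimax (worst-noise) capacity under distortion constraint `d`. -/
def Cworst {l : ℕ} (δ : Fin l → ℝ) (d : ℝ) : ℝ :=
  sInf {r : ℝ | ∃ pN : Fin l → ℝ, IsPmf pN ∧ (∑ x, pN x * δ x) ≤ d ∧ r = Cadd δ d pN}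

/-- Wyner's common information `K(X;Y)` (auxiliary alphabet of size 4). -/
def wynerK (q : 𝒳 × 𝒴 → ℝ) : ℝ :=
  sInf {r : ℝ | ∃ W : 𝒳 × 𝒴 → Fin 4 → ℝ, IsCondPmf W ∧
    Markov (fun t : 𝒳 × Fin 4 × 𝒴 => q (t.1, t.2.2) * W (t.1, t.2.2) t.2.1) ∧
    r = MI (fun t : (𝒳 × 𝒴) × Fin 4 => q t.1 * W t.1 t.2)}

/-- The one-description (Kimura–Uyematsu) upper bound `R_U*(d1,d2)`. -/
def oneDescUB (q : 𝒳 × 𝒴 → ℝ) (δ1 : 𝒳 → Xh → ℝ) (δ2 : 𝒴 → Yh → ℝ) (d1 d2 : ℝ) : ℝ :=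
  sInf {r : ℝ | ∃ W : 𝒳 × 𝒴 → Fin (Fintype.card 𝒳 * Fintype.card 𝒴 + 2) → ℝ,
    IsCondPmf W ∧
    (∃ π1 : Fin (Fintype.card 𝒳 * Fintype.card 𝒴 + 2) × 𝒴 → Xh,
      (∑ x, ∑ y, ∑ c, q (x, y) * W (x, y) c * δ1 x (π1 (c, y))) ≤ d1) ∧
    (∃ π2 : Fin (Fintype.card 𝒳 * Fintype.card 𝒴 + 2) × 𝒳 → Yh,
      (∑ x, ∑ y, ∑ c, q (x, y) * W (x, y) c * δ2 y (π2 (c, x))) ≤ d2) ∧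
    r = max
      (condMI (fun t : 𝒳 × 𝒴 × Fin (Fintype.card 𝒳 * Fintype.card 𝒴 + 2) =>
        q (t.1, t.2.1) * W (t.1, t.2.1) t.2.2))
      (condMI (fun t : 𝒴 × 𝒳 × Fin (Fintype.card 𝒳 * Fintype.card 𝒴 + 2) =>
        q (t.2.1, t.1) * W (t.2.1, t.1) t.2.2))}

end TWR

/-!
Write `Z = X ∆ Y`. For the DSBS, `Z` is Bernoulli(`ρ`) and independent of `Y` (and of `X`), and for
Hamming distortion a receiver that knows one source block faces the same problem as one that has to
reconstruct the block `Z`. Both receivers are therefore served by one code for `Z`, and the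
rate is governed by the smaller of the two distortions.

The rate for `Z` is attained by random coding: a codebook drawn from the output law of the test
channel contains, with probability close to one, a word jointly typical with the source block as
soon as its rate exceeds the mutual information. Conversely, a code with few words and small
distortion induces a law on source blocks, namely the mixture over its words of the backward
binary symmetric channel, whose cross entropy with the source is small, and Gibbs' inequality bounds
this cross entropy from below by the source entropy.
-/

namespace TWR

open Filter Topology
open scoped symmDiff

section FiniteProbability

variable {α β : Type} [Fintype α] [Fintype β] {p : α → ℝ}

/-- The probability of the event `E` under a pmf `p` on a finite alphabet. -/
def prob (p : α → ℝ) (E : Set α) : ℝ := ∑ a, E.indicator p a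

lemma prob_mono (hp : ∀ a, 0 ≤ p a) {E F : Set α} (h : E ⊆ F) : prob p E ≤ prob p F :=
  Finset.sum_le_sum fun a _ => Set.indicator_le_indicator_of_subset h hp a

lemma prob_nonneg (hp : ∀ a, 0 ≤ p a) (E : Set α) : 0 ≤ prob p E :=
  Finset.sum_nonneg fun a _ => Set.indicator_nonneg (fun a _ => hp a) a

lemma prob_union_le (hp : ∀ a, 0 ≤ p a) (E F : Set α) : prob p (E ∪ F) ≤ prob p E + prob p F := by
  unfold prob
  rw [← Finset.sum_add_distrib]
  refine Finset.sum_le_sum fun a _ => ?_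
  rw [← Set.indicator_union_add_inter_apply]
  exact le_add_of_nonneg_right (Set.indicator_nonneg (fun a _ => hp a) a)

lemma prob_add_prob_compl (p : α → ℝ) (E : Set α) : prob p E + prob p Eᶜ = ∑ a, p a := by
  simp only [prob, ← Finset.sum_add_distrib, Set.indicator_self_add_compl_apply]

lemma IsPmf.exists_le_sum_mul (hp : IsPmf p) (f : α → ℝ) : ∃ a, f a ≤ ∑ a, p a * f a := by
  obtain ⟨a, -, ha⟩ := (concaveOn_id convex_univ).exists_le_of_centerMass (t := Finset.univ)
    (w := p) (p := f) (fun a _ => hp.1 a) (hp.2 ▸ one_pos) fun _ _ => Set.mem_univ _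
  exact ⟨a, by simpa [Finset.centerMass_eq_of_sum_1 _ _ hp.2] using ha⟩

/-- The law of `n` independent letters with common law `p`. -/
def blockPmf (p : α → ℝ) (n : ℕ) (a : Fin n → α) : ℝ := ∏ i, p (a i)

lemma sum_prod_apply {n : ℕ} (F : Fin n → α → ℝ) :
    ∑ a : Fin n → α, ∏ i, F i (a i) = ∏ i, ∑ x, F i x := by
  rw [Finset.prod_univ_sum, Fintype.piFinset_univ]

lemma blockPmf_nonneg {α : Type} {p : α → ℝ} (hp : ∀ x, 0 ≤ p x) (n : ℕ) (a : Fin n → α) :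
    0 ≤ blockPmf p n a :=
  Finset.prod_nonneg fun _ _ => hp _

lemma IsPmf.blockPmf (hp : IsPmf p) (n : ℕ) : IsPmf (blockPmf p n) :=
  ⟨blockPmf_nonneg hp.1 n, by simp [TWR.blockPmf, sum_prod_apply fun _ => p, hp.2]⟩

lemma sum_blockPmf_mul_apply (hp : ∑ x, p x = 1) (f : α → ℝ) {n : ℕ} (i : Fin n) :
    ∑ a, blockPmf p n a * f (a i) = ∑ x, p x * f x := by
  have hfactor : ∀ a : Fin n → α,
      blockPmf p n a * f (a i) = ∏ j, p (a j) * (if j = i then f (a j) else 1) := fun a => by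
    rw [Finset.prod_mul_distrib, Fintype.prod_ite_eq' i fun j => f (a j), blockPmf]
  simp only [hfactor]
  rw [sum_prod_apply fun j x => p x * (if j = i then f x else 1), Fintype.prod_eq_single i]
  · simp
  · intro j hj
    simp [hj, hp]

lemma sum_blockPmf_mul_sum (hp : ∑ x, p x = 1) (f : α → ℝ) (n : ℕ) :
    ∑ a, blockPmf p n a * ∑ i, f (a i) = n * ∑ x, p x * f x := by
  simp only [Finset.mul_sum]
  rw [Finset.sum_comm]
  simp [sum_blockPmf_mul_apply hp, Finset.mul_sum]

lemma margX_iid {α : Type} (J : α × β → ℝ) (n : ℕ) : margX (iid J n) = blockPmf (margX J) n :=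
  funext fun a => sum_prod_apply fun i y => J (a i, y)

lemma IsPmf.margX {J : α × β → ℝ} (hJ : IsPmf J) : IsPmf (margX J) :=
  ⟨fun _ => Finset.sum_nonneg fun _ _ => hJ.1 _, (Fintype.sum_prod_type J).symm.trans hJ.2⟩

lemma IsPmf.margY {J : α × β → ℝ} (hJ : IsPmf J) : IsPmf (margY J) :=
  ⟨fun _ => Finset.sum_nonneg fun _ _ => hJ.1 _, (Fintype.sum_prod_type_right J).symm.trans hJ.2⟩

lemma prob_iid (J : α × β → ℝ) (n : ℕ) (E : Set ((Fin n → α) × (Fin n → β))) :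
    prob (iid J n) E = prob (blockPmf J n) {t | (fun i => (t i).1, fun i => (t i).2) ∈ E} :=
  (Fintype.sum_equiv (Equiv.arrowProdEquivProdArrow (Fin n) (fun _ => α) fun _ => β) _ _
    fun _ => rfl).symm

lemma IsPmf.iid {J : α × β → ℝ} (hJ : IsPmf J) (n : ℕ) : IsPmf (iid J n) :=
  ⟨fun _ => Finset.prod_nonneg fun _ _ => hJ.1 _, by
    rw [← (hJ.margX.blockPmf n).2, ← margX_iid, Fintype.sum_prod_type]
    rfl⟩

end FiniteProbability

section LawOfLargeNumbers

variable {α : Type} [Fintype α] {p : α → ℝ}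

lemma prob_blockPmf_sum_nonneg_le (hp : ∀ x, 0 ≤ p x) (f : α → ℝ) {s : ℝ} (hs : 0 ≤ s) (n : ℕ) :
    prob (blockPmf p n) {a | 0 ≤ ∑ i, f (a i)} ≤ (∑ x, p x * Real.exp (s * f x)) ^ n := by
  rw [Fintype.sum_pow]
  refine Finset.sum_le_sum fun a _ => ?_
  have hexp : ∏ i, p (a i) * Real.exp (s * f (a i))
      = blockPmf p n a * Real.exp (s * ∑ i, f (a i)) := by
    rw [Finset.prod_mul_distrib, ← Real.exp_sum, Finset.mul_sum, blockPmf]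
  rw [hexp]
  refine Set.indicator_apply_le' (fun ha => ?_) fun _ => ?_
  · exact le_mul_of_one_le_right (blockPmf_nonneg hp n a) (Real.one_le_exp (mul_nonneg hs ha))
  · exact mul_nonneg (blockPmf_nonneg hp n a) (Real.exp_pos _).le

lemma exists_sum_mul_exp_lt_one (hp : ∑ x, p x = 1) {f : α → ℝ} (hf : ∑ x, p x * f x < 0) :
    ∃ s > 0, ∑ x, p x * Real.exp (s * f x) < 1 := by
  have hderiv : HasDerivAt (fun s => ∑ x, p x * Real.exp (s * f x)) (∑ x, p x * f x) 0 :=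
    HasDerivAt.fun_sum fun x _ => by
      simpa using (((hasDerivAt_id (0 : ℝ)).mul_const (f x)).exp).const_mul (p x)
  have hslope := hderiv.tendsto_slope_zero_right.eventually_lt_const hf
  obtain ⟨s, hs, hs0⟩ := (hslope.and self_mem_nhdsWithin).exists
  refine ⟨s, hs0, ?_⟩
  simpa [hp, mul_neg_iff, inv_pos.2 hs0, (inv_pos.2 hs0).le.not_gt] using hs

lemma tendsto_prob_blockPmf_lt_sum (hp : IsPmf p) {f : α → ℝ} {μ : ℝ} (hf : ∑ x, p x * f x < μ) :
    Tendsto (fun n : ℕ => prob (blockPmf p n) {a | n * μ < ∑ i, f (a i)}) atTop (𝓝 0) := by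
  have hcentered : ∑ x, p x * (f x - μ) < 0 := by
    simpa [mul_sub, ← Finset.sum_mul, hp.2] using hf
  obtain ⟨s, hs, hs1⟩ := exists_sum_mul_exp_lt_one hp.2 hcentered
  have hs0 : 0 ≤ ∑ x, p x * Real.exp (s * (f x - μ)) :=
    Finset.sum_nonneg fun x _ => mul_nonneg (hp.1 x) (Real.exp_pos _).le
  refine squeeze_zero (fun n => prob_nonneg (blockPmf_nonneg hp.1 n) _) (fun n => ?_)
    (tendsto_pow_atTop_nhds_zero_of_lt_one hs0 hs1)
  refine (prob_mono (blockPmf_nonneg hp.1 n) fun a (ha : n * μ < ∑ i, f (a i)) => ?_).trans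
    (prob_blockPmf_sum_nonneg_le hp.1 (fun x => f x - μ) hs.le n)
  simpa using ha.le

end LawOfLargeNumbers

section Entropy

variable {α β : Type} [Fintype α] [Fintype β] {p q : α → ℝ}

lemma IsPmf.H2_le_crossEntropy (hp : IsPmf p) (hq : ∀ a, 0 ≤ q a) (hq1 : ∑ a, q a ≤ 1)
    (hac : ∀ a, q a = 0 → p a = 0) : H2 p ≤ -∑ a, p a * Real.logb 2 (q a) := by
  have hlog : ∀ a, p a * Real.log (q a) - p a * Real.log (p a) ≤ q a - p a := fun a => by
    rcases (hp.1 a).eq_or_lt' with hpa | hpa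
    · simp [hpa, hq a]
    · have hqa : 0 < q a := (hq a).lt_of_ne' (mt (hac a) hpa.ne')
      have h := mul_le_mul_of_nonneg_left
        (Real.log_le_sub_one_of_pos (div_pos hqa hpa)) hpa.le
      rwa [Real.log_div hqa.ne' hpa.ne', mul_sub, mul_sub, mul_div_cancel₀ _ hpa.ne',
        mul_one] at h
  have hsum : ∑ a, p a * Real.log (q a) ≤ ∑ a, p a * Real.log (p a) := by
    have h := Finset.sum_le_sum fun a (_ : a ∈ Finset.univ) => hlog a
    simp only [Finset.sum_sub_distrib, hp.2] at h
    linarith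
  simp only [H2, Real.logb, mul_div_assoc', ← Finset.sum_div]
  exact neg_le_neg (div_le_div_of_nonneg_right hsum (Real.log_pos one_lt_two).le)

lemma mul_mul_logb_mul (b x y : ℝ) :
    x * y * Real.logb b (x * y) = y * (x * Real.logb b x) + x * (y * Real.logb b y) := by
  rcases eq_or_ne x 0 with rfl | hx
  · simp
  rcases eq_or_ne y 0 with rfl | hy
  · simp
  rw [Real.logb_mul hx hy]
  ring

lemma mul_logb_prod {ι : Type*} (s : Finset ι) (b : ℝ) (x : ι → ℝ) :
    (∏ i ∈ s, x i) * Real.logb b (∏ i ∈ s, x i)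
      = (∏ i ∈ s, x i) * ∑ i ∈ s, Real.logb b (x i) := by
  by_cases h : ∀ i ∈ s, x i ≠ 0
  · rw [Real.logb_prod _ _ h]
  · push Not at h
    obtain ⟨i, hi, hxi⟩ := h
    simp [Finset.prod_eq_zero hi hxi]

lemma IsPmf.H2_blockPmf (hp : IsPmf p) (n : ℕ) : H2 (TWR.blockPmf p n) = n * H2 p := by
  simp only [H2, mul_neg, ← sum_blockPmf_mul_sum hp.2 fun x => Real.logb 2 (p x), TWR.blockPmf,
    mul_logb_prod]

/-- The information density of a joint pmf, whose mean is the mutual information. The logarithms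
are kept apart, so that letters of probability zero contribute `Real.logb 2 0 = 0`. -/
def infoDensity (J : α × β → ℝ) (t : α × β) : ℝ :=
  Real.logb 2 (J t) - Real.logb 2 (margX J t.1) - Real.logb 2 (margY J t.2)

variable {J : α × β → ℝ}

lemma sum_mul_fst (J : α × β → ℝ) (g : α → ℝ) : ∑ t, J t * g t.1 = ∑ a, margX J a * g a := by
  simp only [Fintype.sum_prod_type, margX, Finset.sum_mul]

lemma sum_mul_snd (J : α × β → ℝ) (g : β → ℝ) : ∑ t, J t * g t.2 = ∑ b, margY J b * g b := by
  simp only [Fintype.sum_prod_type_right, margY, Finset.sum_mul]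

lemma sum_mul_infoDensity (J : α × β → ℝ) : ∑ t, J t * infoDensity J t = MI J := by
  simp only [infoDensity, mul_sub, Finset.sum_sub_distrib,
    sum_mul_fst J fun a => Real.logb 2 (margX J a), sum_mul_snd J fun b => Real.logb 2 (margY J b)]
  simp only [MI, H2, margX, margY]
  ring

lemma IsPmf.eq_zero_of_margX_eq_zero (hJ : IsPmf J) {t : α × β} (h : TWR.margX J t.1 = 0) :
    J t = 0 :=
  (Finset.sum_eq_zero_iff_of_nonneg fun b _ => hJ.1 (t.1, b)).1 h t.2 (Finset.mem_univ _)

lemma IsPmf.eq_zero_of_margY_eq_zero (hJ : IsPmf J) {t : α × β} (h : TWR.margY J t.2 = 0) :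
    J t = 0 :=
  (Finset.sum_eq_zero_iff_of_nonneg fun a _ => hJ.1 (a, t.2)).1 h t.1 (Finset.mem_univ _)

lemma IsPmf.MI_nonneg (hJ : IsPmf J) : 0 ≤ MI J := by
  have hac : ∀ t : α × β, TWR.margX J t.1 * TWR.margY J t.2 = 0 → J t = 0 := fun t ht =>
    (mul_eq_zero.1 ht).elim hJ.eq_zero_of_margX_eq_zero hJ.eq_zero_of_margY_eq_zero
  have hgibbs := hJ.H2_le_crossEntropy
    (q := fun t => TWR.margX J t.1 * TWR.margY J t.2)
    (fun t => mul_nonneg (hJ.margX.1 _) (hJ.margY.1 _))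
    (by simp [Fintype.sum_prod_type, ← Finset.mul_sum, hJ.margX.2, hJ.margY.2]) hac
  have hlog : ∀ t, J t * Real.logb 2 (TWR.margX J t.1 * TWR.margY J t.2)
      = J t * Real.logb 2 (J t) - J t * infoDensity J t := fun t => by
    by_cases ht : TWR.margX J t.1 * TWR.margY J t.2 = 0
    · simp [hac t ht]
    · rw [infoDensity, Real.logb_mul (left_ne_zero_of_mul ht) (right_ne_zero_of_mul ht)]
      ring
  simp only [hlog, Finset.sum_sub_distrib, sum_mul_infoDensity] at hgibbs
  simp only [H2] at hgibbs
  linarith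

lemma IsPmf.le_two_rpow_infoDensity_mul (hJ : IsPmf J) (t : α × β) :
    J t ≤ 2 ^ infoDensity J t * (TWR.margX J t.1 * TWR.margY J t.2) := by
  have hX := hJ.margX.1 t.1
  have hY := hJ.margY.1 t.2
  rcases (hJ.1 t).eq_or_lt' with h | h
  · rw [h]
    positivity
  · have hX' := hX.lt_of_ne' (mt hJ.eq_zero_of_margX_eq_zero h.ne')
    have hY' := hY.lt_of_ne' (mt hJ.eq_zero_of_margY_eq_zero h.ne')
    have h2 : ∀ x : ℝ, 0 < x → (2 : ℝ) ^ Real.logb 2 x = x := fun x =>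
      Real.rpow_logb two_pos (by norm_num)
    rw [infoDensity, Real.rpow_sub two_pos, Real.rpow_sub two_pos, h2 _ h, h2 _ hX', h2 _ hY']
    field_simp
    exact le_rfl

lemma IsPmf.iid_le_two_rpow_sum_infoDensity_mul (hJ : IsPmf J) {n : ℕ} (a : Fin n → α)
    (b : Fin n → β) :
    TWR.iid J n (a, b) ≤ 2 ^ (∑ i, infoDensity J (a i, b i))
      * (TWR.blockPmf (TWR.margX J) n a * TWR.blockPmf (TWR.margY J) n b) := by
  simp only [TWR.iid, TWR.blockPmf, Real.rpow_sum_of_pos two_pos, ← Finset.prod_mul_distrib]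
  exact Finset.prod_le_prod (fun i _ => hJ.1 _) fun i _ => hJ.le_two_rpow_infoDensity_mul _

end Entropy

section Covering

variable {α β : Type} [Fintype α] [Fintype β]

lemma exists_codebook_prob_le (P : α → ℝ) {Q : β → ℝ} (hQ : IsPmf Q) (G : Set (α × β)) (M : ℕ) :
    ∃ c : Fin M → β,
      prob P {a | ∀ j, (a, c j) ∉ G} ≤ ∑ a, P a * prob Q {b | (a, b) ∉ G} ^ M := by
  obtain ⟨c, hc⟩ := (hQ.blockPmf M).exists_le_sum_mul fun c => prob P {a | ∀ j, (a, c j) ∉ G}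
  refine ⟨c, hc.trans_eq ?_⟩
  have hfactor : ∀ (c : Fin M → β) (a : α),
      blockPmf Q M c * {a | ∀ j, (a, c j) ∉ G}.indicator P a
        = P a * ∏ j, {b | (a, b) ∉ G}.indicator Q (c j) := fun c a => by
    simp only [Set.indicator_apply, Fintype.prod_ite_zero, blockPmf]
    simp [mul_comm]
  simp only [prob, Finset.mul_sum, hfactor]
  rw [Finset.sum_comm]
  simp only [← Finset.mul_sum, Fintype.sum_pow]

lemma mul_one_sub_pow_le {P q w T : ℝ} (hq : q ≤ 1) (hw : 0 ≤ w) (hwP : w ≤ P)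
    (hwq : w ≤ T * (P * q)) (hT : 0 < T) (M : ℕ) :
    P * (1 - q) ^ M ≤ (P - w) + P * Real.exp (-(M / T)) := by
  rcases (hw.trans hwP).eq_or_lt' with hP | hP
  · simp [hP, hwP.antisymm (hP.le.trans hw)]
  obtain ⟨u, rfl⟩ : ∃ u, w = P * u := ⟨w / P, (mul_div_cancel₀ _ hP.ne').symm⟩
  have hu0 : 0 ≤ u := nonneg_of_mul_nonneg_right hw hP
  have hu1 : u ≤ 1 := le_of_mul_le_mul_left (by simpa using hwP) hP
  have huq : u / T ≤ q := by
    rw [div_le_iff₀' hT]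
    exact le_of_mul_le_mul_left (by linarith) hP
  -- On `[-M / T, 0]` the exponential lies below its chord.
  have hconvex : Real.exp (-(M * (u / T))) ≤ u * Real.exp (-(M / T)) + (1 - u) := by
    have h := convexOn_exp.2 (Set.mem_univ (-(M / T))) (Set.mem_univ 0) hu0 (sub_nonneg.2 hu1)
      (add_sub_cancel u 1)
    simp only [smul_eq_mul, mul_zero, add_zero, Real.exp_zero, mul_one] at h
    rwa [show u * -((M : ℝ) / T) = -(M * (u / T)) by ring] at h
  calc P * (1 - q) ^ M ≤ P * Real.exp (-(u / T)) ^ M := by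
        gcongr
        linarith [Real.one_sub_le_exp_neg (u / T)]
    _ = P * Real.exp (-(M * (u / T))) := by rw [← Real.exp_nat_mul, mul_neg]
    _ ≤ P * (u * Real.exp (-(M / T)) + (1 - u)) := by gcongr
    _ ≤ (P - P * u) + P * Real.exp (-(M / T)) := by
        nlinarith [mul_nonneg hP.le (mul_nonneg (sub_nonneg.2 hu1) (Real.exp_pos (-(M / T))).le)]

lemma exists_codebook_prob_le_of_le_mul {J : α × β → ℝ} (hJ : IsPmf J) {Q : β → ℝ} (hQ : IsPmf Q)
    {G : Set (α × β)} {T : ℝ} (hT : 0 < T) (hG : ∀ t ∈ G, J t ≤ T * (margX J t.1 * Q t.2))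
    (M : ℕ) :
    ∃ c : Fin M → β,
      prob (margX J) {a | ∀ j, (a, c j) ∉ G} ≤ prob J Gᶜ + Real.exp (-(M / T)) := by
  obtain ⟨c, hc⟩ := exists_codebook_prob_le (margX J) hQ G M
  refine ⟨c, hc.trans ?_⟩
  have hletter : ∀ a, margX J a * prob Q {b | (a, b) ∉ G} ^ M
      ≤ ∑ b, Gᶜ.indicator J (a, b) + margX J a * Real.exp (-(M / T)) := fun a => by
    set w := ∑ b, G.indicator J (a, b)
    set q := prob Q {b | (a, b) ∈ G}
    have hqc : prob Q {b | (a, b) ∉ G} = 1 - q :=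
      eq_sub_of_add_eq' ((prob_add_prob_compl Q _).trans hQ.2)
    have hwc : ∑ b, Gᶜ.indicator J (a, b) = margX J a - w := eq_sub_of_add_eq' <| by
      simp only [w, ← Finset.sum_add_distrib, Set.indicator_self_add_compl_apply, margX]
    have hw : ∀ b, 0 ≤ G.indicator J (a, b) := fun b => Set.indicator_nonneg (fun t _ => hJ.1 t) _
    have hwc0 : ∀ b, 0 ≤ Gᶜ.indicator J (a, b) := fun b =>
      Set.indicator_nonneg (fun t _ => hJ.1 t) _
    have hwq : w ≤ T * (margX J a * q) := by
      simp only [w, q, prob, Finset.mul_sum]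
      refine Finset.sum_le_sum fun b _ => ?_
      by_cases hb : (a, b) ∈ G
      · simpa [hb] using hG _ hb
      · simp [hb]
    have h := mul_one_sub_pow_le (by linarith [prob_nonneg hQ.1 {b | (a, b) ∉ G}])
      (Finset.sum_nonneg fun b _ => hw b)
      (by linarith [Finset.sum_nonneg fun b (_ : b ∈ Finset.univ) => hwc0 b]) hwq hT M
    rwa [hqc, hwc]
  refine (Finset.sum_le_sum fun a _ => hletter a).trans_eq ?_
  rw [Finset.sum_add_distrib, ← Finset.sum_mul, hJ.margX.2, one_mul, prob, Fintype.sum_prod_type]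

end Covering

section BlockCodes

variable {α β : Type} [Fintype α] {p : α → ℝ}

/-- The expected per-letter distortion of the reconstruction map `φ` for the memoryless source
with letter law `p`. -/
def blockDistortion (p : α → ℝ) (δ : α → β → ℝ) {n : ℕ}
    (φ : (Fin n → α) → Fin n → β) : ℝ :=
  ∑ a, blockPmf p n a * ((n : ℝ)⁻¹ * ∑ i, δ (a i) (φ a i))

lemma blockDistortion_le (hp : IsPmf p) {δ : α → β → ℝ} {D K : ℝ}
    (hδ : ∀ a b, δ a b ≤ D + K) {n : ℕ} (hn : 0 < n) {φ : (Fin n → α) → Fin n → β}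
    {U : Set (Fin n → α)} (hU : ∀ a ∉ U, ∑ i, δ (a i) (φ a i) ≤ n * D) :
    blockDistortion p δ φ ≤ D + K * prob (blockPmf p n) U := by
  have hn' : (0 : ℝ) < n := Nat.cast_pos.2 hn
  have hblock : ∀ a, blockPmf p n a * ((n : ℝ)⁻¹ * ∑ i, δ (a i) (φ a i))
      ≤ blockPmf p n a * D + K * U.indicator (blockPmf p n) a := fun a => by
    have ha := blockPmf_nonneg hp.1 n a
    by_cases haU : a ∈ U
    · have hsum : ∑ i, δ (a i) (φ a i) ≤ n * (D + K) := by
        simpa [-smul_add] using Finset.sum_le_card_nsmul Finset.univ _ _ fun i _ => hδ (a i) (φ a i)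
      rw [Set.indicator_of_mem haU]
      linarith [mul_le_mul_of_nonneg_left ((inv_mul_le_iff₀ hn').2 hsum) ha]
    · rw [Set.indicator_of_notMem haU, mul_zero, add_zero]
      exact mul_le_mul_of_nonneg_left ((inv_mul_le_iff₀ hn').2 (hU a haU)) ha
  calc blockDistortion p δ φ
      ≤ ∑ a, (blockPmf p n a * D + K * U.indicator (blockPmf p n) a) :=
        Finset.sum_le_sum fun a _ => hblock a
    _ = D + K * prob (blockPmf p n) U := by
        rw [Finset.sum_add_distrib, ← Finset.sum_mul, (hp.blockPmf n).2, one_mul,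
          ← Finset.mul_sum, prob]

-- Gibbs' inequality against the mixture over the codebook of the backward test channels.
theorem IsPmf.mul_H2_le_logb_sub (hp : IsPmf p) {W : β → α → ℝ} (hW : IsCondPmf W)
    (hW0 : ∀ b a, 0 < W b a) {n m : ℕ} (e : (Fin n → α) → Fin m) (c : Fin m → Fin n → β) :
    n * H2 p ≤ Real.logb 2 m
      - ∑ a, TWR.blockPmf p n a * ∑ i, Real.logb 2 (W (c (e a) i) (a i)) := by
  have hprod : ∀ (b : Fin n → β) (a : Fin n → α), 0 < ∏ i, W (b i) (a i) := fun b a =>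
    Finset.prod_pos fun i _ => hW0 _ _
  have hm : ∀ _ : Fin n → α, (0 : ℝ) < m := fun a => Nat.cast_pos.2 (e a).pos
  have hsum : ∑ a, (m : ℝ)⁻¹ * ∏ i, W (c (e a) i) (a i) ≤ 1 := by
    rw [← Finset.mul_sum]
    calc (m : ℝ)⁻¹ * ∑ a, ∏ i, W (c (e a) i) (a i)
        ≤ (m : ℝ)⁻¹ * ∑ a : Fin n → α, ∑ j, ∏ i, W (c j i) (a i) := by
          gcongr with a
          exact Finset.single_le_sum (f := fun j => ∏ i, W (c j i) (a i))
            (fun j _ => (hprod _ a).le) (Finset.mem_univ (e a))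
      _ = (m : ℝ)⁻¹ * m := by
          rw [Finset.sum_comm]
          simp [fun j => sum_prod_apply fun i => W (c j i), fun b => (hW b).2]
      _ ≤ 1 := inv_mul_le_one
  have hgibbs := (hp.blockPmf n).H2_le_crossEntropy
    (fun a => (mul_pos (inv_pos.2 (hm a)) (hprod (c (e a)) a)).le) hsum
    (fun a ha => absurd ha (mul_pos (inv_pos.2 (hm a)) (hprod (c (e a)) a)).ne')
  have hlog : ∀ a, Real.logb 2 ((m : ℝ)⁻¹ * ∏ i, W (c (e a) i) (a i))
      = ∑ i, Real.logb 2 (W (c (e a) i) (a i)) - Real.logb 2 m := fun a => by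
    rw [Real.logb_mul (inv_pos.2 (hm a)).ne' (hprod _ a).ne', Real.logb_inv,
      Real.logb_prod _ _ fun i _ => (hW0 _ _).ne']
    ring
  simp only [hlog, mul_sub, Finset.sum_sub_distrib, ← Finset.sum_mul, (hp.blockPmf n).2,
    hp.H2_blockPmf] at hgibbs
  linarith

end BlockCodes

section SourceCodingTheorem

variable {α β : Type} [Fintype α] [Fintype β] {J : α × β → ℝ} {δ : α → β → ℝ} {R R' D : ℝ}

/-- The pairs of blocks whose information density is at most `R` and whose distortion is at most
`D` per letter. These one-sided bounds are all of typicality that coding needs. -/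
def typicalSet (J : α × β → ℝ) (δ : α → β → ℝ) (R D : ℝ) (n : ℕ) :
    Set ((Fin n → α) × (Fin n → β)) :=
  {t | ∑ i, infoDensity J (t.1 i, t.2 i) ≤ n * R ∧ ∑ i, δ (t.1 i) (t.2 i) ≤ n * D}

lemma tendsto_prob_compl_typicalSet (hJ : IsPmf J) (hR : MI J < R)
    (hD : ∑ t, J t * δ t.1 t.2 < D) :
    Tendsto (fun n => prob (iid J n) (typicalSet J δ R D n)ᶜ) atTop (𝓝 0) := by
  have hinfo := tendsto_prob_blockPmf_lt_sum hJ ((sum_mul_infoDensity J).trans_lt hR)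
  have hdist := tendsto_prob_blockPmf_lt_sum hJ hD
  have hsum := hinfo.add hdist
  rw [add_zero] at hsum
  refine squeeze_zero (fun n => prob_nonneg (hJ.iid n).1 _) (fun n => ?_) hsum
  rw [prob_iid]
  refine (prob_mono (blockPmf_nonneg hJ.1 n) fun t ht => ?_).trans
    (prob_union_le (blockPmf_nonneg hJ.1 n) _ _)
  exact (not_and_or.1 ht).imp not_le.1 not_le.1

lemma IsPmf.iid_le_of_mem_typicalSet (hJ : IsPmf J) {n : ℕ} {t : (Fin n → α) × (Fin n → β)}
    (ht : t ∈ typicalSet J δ R D n) :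
    TWR.iid J n t ≤ 2 ^ (n * R)
      * (TWR.margX (TWR.iid J n) t.1 * TWR.blockPmf (TWR.margY J) n t.2) := by
  rw [margX_iid]
  refine (hJ.iid_le_two_rpow_sum_infoDensity_mul t.1 t.2).trans ?_
  have hX := blockPmf_nonneg hJ.margX.1 n t.1
  have hY := blockPmf_nonneg hJ.margY.1 n t.2
  gcongr
  · exact one_le_two
  · exact ht.1

lemma tendsto_exp_neg_floor_div (hR : 0 ≤ R) (hRR' : R < R') :
    Tendsto (fun n : ℕ => Real.exp (-(⌊(2 : ℝ) ^ (n * R')⌋₊ / 2 ^ (n * R)))) atTop (𝓝 0) := by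
  refine Real.tendsto_exp_neg_atTop_nhds_zero.comp ?_
  have hpow : Tendsto (fun n : ℕ => ((2 : ℝ) ^ (R' - R)) ^ n - 1) atTop atTop :=
    tendsto_atTop_add_const_right _ _ (tendsto_pow_atTop_atTop_of_one_lt
      (Real.one_lt_rpow one_lt_two (sub_pos.2 hRR')))
  refine tendsto_atTop_mono (fun n => ?_) hpow
  have hone : (1 : ℝ) ≤ 2 ^ (n * R) := Real.one_le_rpow one_le_two (by positivity)
  have hsplit : ((2 : ℝ) ^ (R' - R)) ^ n * 2 ^ (n * R) = 2 ^ (n * R') := by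
    rw [← Real.rpow_mul_natCast two_pos.le, ← Real.rpow_add two_pos]
    ring_nf
  rw [le_div_iff₀ (by positivity), sub_mul, hsplit]
  linarith [Nat.lt_floor_add_one ((2 : ℝ) ^ (n * R'))]

lemma logb_floor_two_rpow_div_le (hR : 0 ≤ R) {n : ℕ} (hn : 0 < n) :
    Real.logb 2 ⌊(2 : ℝ) ^ (n * R)⌋₊ / n ≤ R := by
  have hone : (1 : ℝ) ≤ 2 ^ (n * R) := Real.one_le_rpow one_le_two (by positivity)
  rw [div_le_iff₀' (Nat.cast_pos.2 hn),
    Real.logb_le_iff_le_rpow one_lt_two (Nat.cast_pos.2 (Nat.floor_pos.2 hone))]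
  exact Nat.floor_le (by positivity)

lemma exists_encoder {α β : Type} {m : ℕ} (hm : 0 < m) (c : Fin m → β) (G : Set (α × β)) :
    ∃ e : α → Fin m, ∀ a, (∃ j, (a, c j) ∈ G) → (a, c (e a)) ∈ G := by
  have : Nonempty (Fin m) := ⟨⟨0, hm⟩⟩
  exact ⟨fun a => Classical.epsilon fun j => (a, c j) ∈ G, fun a => Classical.epsilon_spec⟩

theorem IsPmf.exists_blockCode (hJ : IsPmf J) (hR : MI J < R) (hD : ∑ t, J t * δ t.1 t.2 < D) :
    ∃ (n m : ℕ) (e : (Fin n → α) → Fin m) (c : Fin m → Fin n → β), 0 < n ∧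
      Real.logb 2 m / n ≤ R ∧ blockDistortion (TWR.margX J) δ (fun a => c (e a)) ≤ D := by
  obtain ⟨R₁, hR₁, hR₁R⟩ := exists_between hR
  obtain ⟨D₁, hD₁, hD₁D⟩ := exists_between hD
  have hR₁0 : 0 ≤ R₁ := hJ.MI_nonneg.trans hR₁.le
  set K := ∑ t : α × β, |δ t.1 t.2 - D₁|
  have hδ : ∀ a b, δ a b ≤ D₁ + K := fun a b => by
    linarith [le_abs_self (δ a b - D₁), Finset.single_le_sum (f := fun t : α × β =>
      |δ t.1 t.2 - D₁|) (fun t _ => abs_nonneg _) (Finset.mem_univ (a, b))]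
  have herr := (((tendsto_prob_compl_typicalSet hJ hR₁ hD₁).add
    (tendsto_exp_neg_floor_div hR₁0 hR₁R)).const_mul K).const_add D₁
  simp only [add_zero, mul_zero] at herr
  obtain ⟨n, hn, hn0⟩ := ((herr.eventually_le_const hD₁D).and (eventually_gt_atTop 0)).exists
  set m := ⌊(2 : ℝ) ^ (n * R)⌋₊
  have hm0 : 0 < m :=
    Nat.floor_pos.2 (Real.one_le_rpow one_le_two (by have := hR₁0.trans hR₁R.le; positivity))
  obtain ⟨c, hc⟩ := exists_codebook_prob_le_of_le_mul (hJ.iid n) (hJ.margY.blockPmf n)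
    (by positivity) (fun t ht => hJ.iid_le_of_mem_typicalSet ht) m
  obtain ⟨e, he⟩ := exists_encoder hm0 c (typicalSet J δ R₁ D₁ n)
  refine ⟨n, m, e, c, hn0, logb_floor_two_rpow_div_le (hR₁0.trans hR₁R.le) hn0, ?_⟩
  rw [margX_iid] at hc
  calc blockDistortion (TWR.margX J) δ (fun a => c (e a))
      ≤ D₁ + K * prob (TWR.blockPmf (TWR.margX J) n) {a | ∀ j, (a, c j) ∉ typicalSet J δ R₁ D₁ n} :=
        blockDistortion_le hJ.margX hδ hn0
          fun a ha => (he a (by simpa using ha)).2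
    _ ≤ D := le_trans (by gcongr) hn

end SourceCodingTheorem

section BinaryEntropy

lemma binEnt_eq_binEntropy_div (x : ℝ) : binEnt x = Real.binEntropy x / Real.log 2 := by
  simp only [binEnt, Real.binEntropy, Real.logb, Real.log_inv]
  ring

lemma continuous_binEnt : Continuous binEnt := by
  simp only [funext binEnt_eq_binEntropy_div]
  fun_prop

lemma binEnt_monotoneOn : MonotoneOn binEnt (Set.Icc 0 (1 / 2)) := fun x hx y hy hxy => by
  rw [one_div] at hx hy
  simp only [binEnt_eq_binEntropy_div]
  exact div_le_div_of_nonneg_right (Real.binEntropy_strictMonoOn.monotoneOn hx hy hxy)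
    (Real.log_pos one_lt_two).le

end BinaryEntropy

section BernoulliSource

variable {ρ d : ℝ}

/-- The Bernoulli pmf on `Bool`, giving probability `r` to `true`. -/
def bernoulliPmf (r : ℝ) : Bool → ℝ
  | true => r
  | false => 1 - r

lemma isPmf_bernoulliPmf {r : ℝ} (h0 : 0 ≤ r) (h1 : r ≤ 1) : IsPmf (bernoulliPmf r) :=
  ⟨by simp [bernoulliPmf, h0, h1], by simp [bernoulliPmf]⟩

lemma H2_bernoulliPmf (r : ℝ) : H2 (bernoulliPmf r) = binEnt r := by
  simp only [H2, Fintype.sum_bool, bernoulliPmf, binEnt]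
  ring

/-- The binary symmetric channel with crossover probability `d`. -/
def bsc (d : ℝ) (b a : Bool) : ℝ := bernoulliPmf d (a ∆ b)

lemma bsc_apply (d : ℝ) (b a : Bool) : bsc d b a = if a = b then 1 - d else d := by
  cases a <;> cases b <;> simp [bsc, bernoulliPmf]

lemma isCondPmf_bsc (h0 : 0 ≤ d) (h1 : d ≤ 1) : IsCondPmf (bsc d) := fun b =>
  ⟨fun _ => (isPmf_bernoulliPmf h0 h1).1 _, by cases b <;> simp [bsc_apply]⟩

lemma bsc_pos (h0 : 0 < d) (h1 : d < 1) (b a : Bool) : 0 < bsc d b a := by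
  rw [bsc_apply]
  split_ifs <;> linarith

lemma logb_bsc (d : ℝ) (b a : Bool) :
    Real.logb 2 (bsc d b a)
      = Real.logb 2 (1 - d) - (Real.logb 2 (1 - d) - Real.logb 2 d) * dHam a b := by
  rw [bsc_apply, dHam]
  split_ifs <;> ring

lemma sum_blockPmf_mul_sum_logb_bsc {p : Bool → ℝ} (hp : IsPmf p) (d : ℝ) {n : ℕ} (hn : 0 < n)
    (φ : (Fin n → Bool) → Fin n → Bool) :
    ∑ a, blockPmf p n a * ∑ i, Real.logb 2 (bsc d (φ a i) (a i))
      = n * (Real.logb 2 (1 - d)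
        - (Real.logb 2 (1 - d) - Real.logb 2 d) * blockDistortion p dHam φ) := by
  have hn' : (n : ℝ) ≠ 0 := Nat.cast_ne_zero.2 hn.ne'
  set s := Real.logb 2 (1 - d) - Real.logb 2 d with hs
  have hblock : ∀ a, blockPmf p n a * ∑ i, Real.logb 2 (bsc d (φ a i) (a i))
      = blockPmf p n a * (n * Real.logb 2 (1 - d))
        - n * s * (blockPmf p n a * ((n : ℝ)⁻¹ * ∑ i, dHam (a i) (φ a i))) := fun a => by
    simp only [logb_bsc, ← hs, Finset.sum_sub_distrib, ← Finset.mul_sum, Finset.sum_const,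
      Finset.card_univ, Fintype.card_fin, nsmul_eq_mul]
    field_simp
  rw [Finset.sum_congr rfl fun a _ => hblock a, Finset.sum_sub_distrib, ← Finset.sum_mul,
    ← Finset.mul_sum, (hp.blockPmf n).2, blockDistortion]
  ring

theorem binEnt_sub_binEnt_le_of_blockDistortion_le (hρ0 : 0 ≤ ρ) (hρ1 : ρ ≤ 1) (hd0 : 0 < d)
    (hd : d ≤ 1 / 2) {n m : ℕ} (hn : 0 < n) (e : (Fin n → Bool) → Fin m)
    (c : Fin m → Fin n → Bool)
    (hD : blockDistortion (bernoulliPmf ρ) dHam (fun a => c (e a)) ≤ d) :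
    binEnt ρ - binEnt d ≤ Real.logb 2 m / n := by
  have hn' : (0 : ℝ) < n := Nat.cast_pos.2 hn
  have hp := isPmf_bernoulliPmf hρ0 hρ1
  set s := Real.logb 2 (1 - d) - Real.logb 2 d with hs
  have hs0 : 0 ≤ s := sub_nonneg.2 (Real.logb_le_logb_of_le one_lt_two hd0 (by linarith))
  have hconv := hp.mul_H2_le_logb_sub (isCondPmf_bsc hd0.le (by linarith))
    (bsc_pos hd0 (by linarith)) e c
  rw [H2_bernoulliPmf, sum_blockPmf_mul_sum_logb_bsc hp d hn] at hconv
  rw [le_div_iff₀' hn']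
  calc (n : ℝ) * (binEnt ρ - binEnt d)
      = n * binEnt ρ + n * (Real.logb 2 (1 - d) - s * d) := by
        rw [hs, binEnt.eq_def d]
        ring
    _ ≤ n * binEnt ρ + n * (Real.logb 2 (1 - d)
        - s * blockDistortion (bernoulliPmf ρ) dHam fun a => c (e a)) := by gcongr
    _ ≤ Real.logb 2 m := by linarith

/-- The joint law of the output and the input of a binary symmetric channel with crossover
probability `d` and Bernoulli(`p`) input. -/
def bscJoint (p d : ℝ) : Bool × Bool → ℝ := fun t => bernoulliPmf p t.2 * bsc d t.2 t.1

lemma isPmf_bscJoint {p : ℝ} (hp0 : 0 ≤ p) (hp1 : p ≤ 1) (hd0 : 0 ≤ d) (hd1 : d ≤ 1) :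
    IsPmf (bscJoint p d) :=
  ⟨fun t => mul_nonneg ((isPmf_bernoulliPmf hp0 hp1).1 _) ((isCondPmf_bsc hd0 hd1 _).1 _), by
    simp only [bscJoint, Fintype.sum_prod_type_right, ← Finset.mul_sum, (isCondPmf_bsc hd0 hd1 _).2,
      mul_one, (isPmf_bernoulliPmf hp0 hp1).2]⟩

lemma margX_bscJoint (p d : ℝ) :
    margX (bscJoint p d) = bernoulliPmf (p * (1 - d) + (1 - p) * d) := by
  funext a
  cases a <;>
    simp only [margX, bscJoint, Fintype.sum_bool, bernoulliPmf, bsc_apply, reduceIte, reduceCtorEq]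
  ring

lemma MI_bscJoint (p d : ℝ) :
    MI (bscJoint p d) = binEnt (p * (1 - d) + (1 - p) * d) - binEnt d := by
  have hY : (fun b => ∑ a, bscJoint p d (a, b)) = bernoulliPmf p := by
    funext b
    cases b <;>
      simp only [bscJoint, Fintype.sum_bool, bernoulliPmf, bsc_apply, reduceIte, reduceCtorEq] <;>
      ring
  have hjoint : H2 (bscJoint p d) = binEnt p + binEnt d := by
    simp only [H2, bscJoint, mul_mul_logb_mul]
    simp only [Fintype.sum_prod_type, Fintype.sum_bool, binEnt, bernoulliPmf, bsc_apply, reduceIte,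
      reduceCtorEq]
    ring
  have hX : H2 (fun a => ∑ b, bscJoint p d (a, b)) = binEnt (p * (1 - d) + (1 - p) * d) := by
    rw [← H2_bernoulliPmf, ← margX_bscJoint]
    rfl
  rw [MI, hX, hY, hjoint, H2_bernoulliPmf]
  ring

lemma sum_bscJoint_mul_dHam (p d : ℝ) : ∑ t, bscJoint p d t * dHam t.1 t.2 = d := by
  simp only [Fintype.sum_prod_type, Fintype.sum_bool, bscJoint, dHam, bernoulliPmf, bsc_apply,
    reduceIte, reduceCtorEq]
  ring

-- The input bias `p = (ρ - d) / (1 - 2d)` makes the output Bernoulli(`ρ`). At `d = 1/2`, where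
-- `ρ = 1/2` as well, division by zero gives `p = 0`, which works too.
theorem exists_blockCode_bernoulliPmf (hd : 0 ≤ d) (hdρ : d ≤ ρ) (hρ : ρ ≤ 1 / 2) {ε : ℝ}
    (hε : 0 < ε) :
    ∃ (n m : ℕ) (e : (Fin n → Bool) → Fin m) (c : Fin m → Fin n → Bool), 0 < n ∧
      Real.logb 2 m / n ≤ binEnt ρ - binEnt d + ε ∧
      blockDistortion (bernoulliPmf ρ) dHam (fun a => c (e a)) ≤ d + ε := by
  set p := (ρ - d) / (1 - 2 * d)
  have hp0 : 0 ≤ p := div_nonneg (by linarith) (by linarith)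
  have hp1 : p ≤ 1 := div_le_one_of_le₀ (by linarith) (by linarith)
  have hout : p * (1 - d) + (1 - p) * d = ρ := by
    have hmul : p * (1 - 2 * d) = ρ - d :=
      div_mul_cancel_of_imp fun h => by linarith
    linarith
  have hJ := isPmf_bscJoint hp0 hp1 hd (by linarith)
  have hcode := hJ.exists_blockCode (lt_add_of_pos_right _ hε)
    ((sum_bscJoint_mul_dHam p d).trans_lt (lt_add_of_pos_right d hε))
  rwa [MI_bscJoint, margX_bscJoint, hout] at hcode

end BernoulliSource

section SwappedSource

variable {α β αh βh : Type} [Fintype α] [Fintype β]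
variable {q : α × β → ℝ} {δ₁ : α → αh → ℝ} {δ₂ : β → βh → ℝ}

lemma Delta1_swap (q : α × β → ℝ) (δ₂ : β → βh → ℝ) {n m : ℕ}
    (f : (Fin n → α) × (Fin n → β) → Fin m) (g : Fin m × (Fin n → α) → Fin n → βh) :
    Delta1 (swap q) δ₂ (f ∘ Prod.swap) g = Delta2 q δ₂ f g :=
  Fintype.sum_equiv (Equiv.prodComm _ _) _ _ fun _ => rfl

lemma Delta2_swap (q : α × β → ℝ) (δ₁ : α → αh → ℝ) {n m : ℕ}
    (f : (Fin n → α) × (Fin n → β) → Fin m) (g : Fin m × (Fin n → β) → Fin n → αh) :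
    Delta2 (swap q) δ₁ (f ∘ Prod.swap) g = Delta1 q δ₁ f g :=
  Fintype.sum_equiv (Equiv.prodComm _ _) _ _ fun _ => rfl

lemma RDAchievable.swap {d₁ d₂ r : ℝ} (h : RDAchievable q δ₁ δ₂ d₁ d₂ r) :
    RDAchievable (TWR.swap q) δ₂ δ₁ d₂ d₁ r := fun ε hε => by
  obtain ⟨n, m, f, g₁, g₂, hn, hrate, hdist₁, hdist₂⟩ := h ε hε
  exact ⟨n, m, f ∘ Prod.swap, g₂, g₁, hn, hrate, (Delta1_swap q δ₂ f g₂).trans_le hdist₂,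
    (Delta2_swap q δ₁ f g₁).trans_le hdist₁⟩

end SwappedSource

section DoublySymmetricBinarySource

variable {ρ d d₁ d₂ r : ℝ}

lemma dsbs_eq_bscJoint (ρ : ℝ) : dsbs ρ = bscJoint (1 / 2) ρ := by
  funext ⟨x, y⟩
  cases x <;> cases y <;>
    simp only [dsbs, bscJoint, bernoulliPmf, bsc_apply, reduceIte, reduceCtorEq] <;> ring

lemma swap_dsbs (ρ : ℝ) : swap (dsbs ρ) = dsbs ρ := by
  funext t
  simp only [swap, dsbs, eq_comm]

lemma iid_bscJoint (p d : ℝ) {n : ℕ} (t : (Fin n → Bool) × (Fin n → Bool)) :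
    iid (bscJoint p d) n t
      = blockPmf (bernoulliPmf p) n t.2 * blockPmf (bernoulliPmf d) n (t.1 ∆ t.2) :=
  Finset.prod_mul_distrib

lemma dHam_symmDiff_symmDiff {α : Type} [GeneralizedBooleanAlgebra α] (a b c : α) :
    dHam (a ∆ c) (b ∆ c) = dHam a b :=
  if_congr symmDiff_left_inj rfl rfl

lemma Delta1_bscJoint (p d : ℝ) {n m : ℕ} (f : (Fin n → Bool) × (Fin n → Bool) → Fin m)
    (g : Fin m × (Fin n → Bool) → Fin n → Bool) :
    Delta1 (bscJoint p d) dHam f g = ∑ y, blockPmf (bernoulliPmf p) n y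
      * blockDistortion (bernoulliPmf d) dHam fun z => g (f (z ∆ y, y), y) ∆ y := by
  rw [Delta1, Fintype.sum_prod_type_right]
  refine Finset.sum_congr rfl fun y _ => ?_
  rw [blockDistortion, Finset.mul_sum]
  refine Fintype.sum_equiv (symmDiff_left_involutive y).toPerm _ _ fun x => ?_
  simp only [iid_bscJoint, Function.Involutive.coe_toPerm, symmDiff_symmDiff_cancel_right,
    Pi.symmDiff_apply, dHam_symmDiff_symmDiff, mul_assoc]

lemma binEnt_sub_binEnt_le_of_Delta1_le {p : ℝ} (hp0 : 0 ≤ p) (hp1 : p ≤ 1) (hρ0 : 0 ≤ ρ)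
    (hρ1 : ρ ≤ 1) (hd0 : 0 < d) (hd : d ≤ 1 / 2) {n m : ℕ} (hn : 0 < n)
    (f : (Fin n → Bool) × (Fin n → Bool) → Fin m) (g : Fin m × (Fin n → Bool) → Fin n → Bool)
    (hD : Delta1 (bscJoint p ρ) dHam f g ≤ d) :
    binEnt ρ - binEnt d ≤ Real.logb 2 m / n := by
  rw [Delta1_bscJoint] at hD
  obtain ⟨y, hy⟩ := ((isPmf_bernoulliPmf hp0 hp1).blockPmf n).exists_le_sum_mul fun y =>
    blockDistortion (bernoulliPmf ρ) dHam fun z => g (f (z ∆ y, y), y) ∆ y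
  exact binEnt_sub_binEnt_le_of_blockDistortion_le hρ0 hρ1 hd0 hd hn
    (fun z => f (z ∆ y, y)) (fun j => g (j, y) ∆ y) (hy.trans hD)

theorem rdAchievable_dsbs (hd : 0 ≤ d) (hdρ : d ≤ ρ) (hρ : ρ ≤ 1 / 2) (hd₁ : d ≤ d₁)
    (hd₂ : d ≤ d₂) : RDAchievable (dsbs ρ) dHam dHam d₁ d₂ (binEnt ρ - binEnt d) := by
  intro ε hε
  obtain ⟨n, m, e, c, hn, hrate, hdist⟩ := exists_blockCode_bernoulliPmf hd hdρ hρ hε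
  let f : (Fin n → Bool) × (Fin n → Bool) → Fin m := fun t => e (t.1 ∆ t.2)
  let g : Fin m × (Fin n → Bool) → Fin n → Bool := fun t => c t.1 ∆ t.2
  have hf : f ∘ Prod.swap = f := funext fun t => congrArg e (symmDiff_comm _ _)
  have hDelta1 : Delta1 (dsbs ρ) dHam f g ≤ d + ε := by
    have hsum := ((isPmf_bernoulliPmf (r := 1 / 2) (by norm_num) (by norm_num)).blockPmf n).2
    simpa only [dsbs_eq_bscJoint, Delta1_bscJoint, f, g, symmDiff_symmDiff_cancel_right,
      ← Finset.sum_mul, hsum, one_mul] using hdist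
  have hDelta2 : Delta2 (dsbs ρ) dHam f g = Delta1 (dsbs ρ) dHam f g := by
    rw [← Delta1_swap, swap_dsbs, hf]
  exact ⟨n, m, f, g, g, hn, hrate, by linarith, by linarith⟩

lemma RDAchievable.binEnt_sub_binEnt_le (h : RDAchievable (dsbs ρ) dHam dHam d₁ d₂ r)
    (hr : 0 ≤ r) (hd₁ : 0 ≤ d₁) (hd₁ρ : d₁ ≤ ρ) (hρ : ρ ≤ 1 / 2) :
    binEnt ρ - binEnt d₁ ≤ r := by
  rcases hd₁ρ.eq_or_lt with rfl | hlt
  · rwa [sub_self]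
  have hcode : ∀ᶠ ε in 𝓝[>] (0 : ℝ), binEnt ρ - binEnt (d₁ + ε) ≤ r + ε := by
    filter_upwards [Ioo_mem_nhdsGT (sub_pos.2 hlt)] with ε ⟨hε, hερ⟩
    obtain ⟨n, m, f, g₁, -, hn, hrate, hdist, -⟩ := h ε hε
    rw [dsbs_eq_bscJoint] at hdist
    exact (binEnt_sub_binEnt_le_of_Delta1_le (by norm_num) (by norm_num) (by linarith)
      (by linarith) (by linarith) (by linarith) hn f g₁ hdist).trans hrate
  have hlhs : ContinuousAt (fun ε => binEnt ρ - binEnt (d₁ + ε)) 0 :=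
    (continuous_const.sub (continuous_binEnt.comp (continuous_const_add d₁))).continuousAt
  have hrhs : ContinuousAt (fun ε => r + ε) 0 := (continuous_const_add r).continuousAt
  simpa using le_of_tendsto_of_tendsto (hlhs.mono_left nhdsWithin_le_nhds)
    (hrhs.mono_left nhdsWithin_le_nhds) hcode

theorem RDAchievable.binEnt_sub_binEnt_min_le (h : RDAchievable (dsbs ρ) dHam dHam d₁ d₂ r)
    (hr : 0 ≤ r) (hd₁ : 0 ≤ d₁) (hd₂ : 0 ≤ d₂) (hmin : min d₁ d₂ ≤ ρ) (hρ : ρ ≤ 1 / 2) :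
    binEnt ρ - binEnt (min d₁ d₂) ≤ r := by
  rcases le_total d₁ d₂ with hle | hle
  · rw [min_eq_left hle] at hmin ⊢
    exact h.binEnt_sub_binEnt_le hr hd₁ hmin hρ
  · rw [min_eq_right hle] at hmin ⊢
    have hswap := h.swap
    rw [swap_dsbs] at hswap
    exact hswap.binEnt_sub_binEnt_le hr hd₂ hmin hρ

end DoublySymmetricBinarySource

end TWR

open TWR in
/-- Example 1: the RD function of the DSBS with Hamming
distortions is `h(ρ) − h(min{d1,d2})` when `min{d1,d2} ≤ ρ`, and `0` otherwise. -/
theorem rd_dsbs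
    (ρ : ℝ) (hρ : ρ ∈ Set.Icc (0 : ℝ) (1 / 2))
    (d1 d2 : ℝ) (hd1 : 0 ≤ d1) (hd2 : 0 ≤ d2) :
    RD (dsbs ρ) (dHam (α := Bool)) (dHam (α := Bool)) d1 d2 =
      if min d1 d2 ≤ ρ then binEnt ρ - binEnt (min d1 d2) else 0 := by
  unfold RD
  split_ifs with hmin
  · have hmin0 : 0 ≤ min d1 d2 := le_min hd1 hd2
    have hmono : binEnt (min d1 d2) ≤ binEnt ρ :=
      binEnt_monotoneOn ⟨hmin0, hmin.trans hρ.2⟩ hρ hmin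
    have hach := rdAchievable_dsbs hmin0 hmin hρ.2 (min_le_left d1 d2) (min_le_right d1 d2)
    exact IsLeast.csInf_eq ⟨⟨sub_nonneg.2 hmono, hach⟩, fun r hr =>
      hr.2.binEnt_sub_binEnt_min_le hr.1 hd1 hd2 hmin hρ.2⟩
  · have hlt := lt_min_iff.1 (not_le.1 hmin)
    have hach := rdAchievable_dsbs hρ.1 le_rfl hρ.2 hlt.1.le hlt.2.le
    rw [sub_self] at hach
    exact IsLeast.csInf_eq ⟨⟨le_rfl, hach⟩, fun r hr => hr.1⟩
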